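/- arXiv:1912.04972 — 2 statements merged into one kernel-verified Lean document; each statement's English description precedes it below -/
import Mathlib

section
/- If there exists a constant C > 0 such that R_2(x) ≤ C·x^{1/4} for all sufficiently large x, or R_2(x) ≥ −C·x^{1/4} for all sufficiently large x, then the Riemann hypothesis holds, i.e., all nontrivial zeros of ζ have real part 1/2. -/
open Filter MeasureTheory Finset

/-- `n` is `k`-free: no `d^k` with `d > 1` divides `n`. -/
def KFree (k n : ℕ) : Prop := ∀ d : ℕ, 1 < d → ¬ d ^ k ∣ n

open Classical in
/-- `Q k x` = number of `k`-free positive integers not exceeding `x`. -/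
noncomputable def Qf (k : ℕ) (x : ℝ) : ℕ :=
  ((Finset.Icc 1 ⌊x⌋₊).filter fun n => KFree k n).card

/-- `R k x = Q_k(x) - x / ζ(k)`. -/
noncomputable def Rf (k : ℕ) (x : ℝ) : ℝ :=
  (Qf k x : ℝ) - x / (riemannZeta k).re

open ProbabilityTheory Topology

section Landau

variable {Ω : Type*} [MeasurableSpace Ω] {μ : Measure Ω} {X : Ω → ℝ}

lemma add_mem_integrableExpSet_of_differentiableOn_ball (hX : 0 ≤ᵐ[μ] X) {c r t : ℝ}
    (hc : c ∈ interior (integrableExpSet X μ)) {H : ℂ → ℂ}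
    (hH : DifferentiableOn ℂ H (Metric.ball (c : ℂ) r)) (hHX : complexMGF X μ =ᶠ[𝓝 (c : ℂ)] H)
    (ht : 0 ≤ t) (htr : t < r) : c + t ∈ integrableExpSet X μ := by
  have hXm : AEMeasurable X μ := aemeasurable_of_mem_interior_integrableExpSet hc
  have h_int (n : ℕ) : Integrable (fun ω ↦ X ω ^ n * Real.exp (c * X ω)) μ :=
    integrable_pow_mul_exp_of_mem_interior_integrableExpSet hc n
  have hder (n : ℕ) : iteratedDeriv n H c = ((∫ ω, X ω ^ n * Real.exp (c * X ω) ∂μ : ℝ) : ℂ) := by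
    rw [← hHX.iteratedDeriv_eq n, iteratedDeriv_complexMGF (by simpa using hc),
      ← integral_complex_ofReal]
    push_cast
    rfl
  have hsum : Summable fun n : ℕ ↦
      ∫ ω, (n.factorial : ℝ)⁻¹ * t ^ n * (X ω ^ n * Real.exp (c * X ω)) ∂μ := by
    have hz : ((c + t : ℝ) : ℂ) ∈ Metric.ball (c : ℂ) r := by
      simp [abs_of_nonneg ht, htr]
    have h := (Complex.hasSum_taylorSeries_on_ball hH hz).summable
    rw [← Complex.summable_ofReal]
    refine h.congr fun n ↦ ?_
    rw [hder, integral_const_mul]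
    push_cast
    simp [mul_assoc]
  have hnonneg (n : ℕ) :
      0 ≤ᵐ[μ] fun ω ↦ (n.factorial : ℝ)⁻¹ * t ^ n * (X ω ^ n * Real.exp (c * X ω)) := by
    filter_upwards [hX] with ω hω
    have : 0 ≤ X ω := hω
    simp only [Pi.zero_apply]
    positivity
  have hexp : ∀ᵐ ω ∂μ, ENNReal.ofReal (Real.exp ((c + t) * X ω)) =
      ∑' n : ℕ, ENNReal.ofReal ((n.factorial : ℝ)⁻¹ * t ^ n * (X ω ^ n * Real.exp (c * X ω))) := by
    filter_upwards [hX] with ω hω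
    have hω' : 0 ≤ X ω := hω
    have h : HasSum (fun n : ℕ ↦ (n.factorial : ℝ)⁻¹ * t ^ n * (X ω ^ n * Real.exp (c * X ω)))
        (Real.exp ((c + t) * X ω)) := by
      have := (NormedSpace.expSeries_div_hasSum_exp (t * X ω)).mul_right (Real.exp (c * X ω))
      rw [← Real.exp_eq_exp_ℝ, ← Real.exp_add] at this
      rw [show (c + t) * X ω = t * X ω + c * X ω by ring]
      have hfun : (fun n : ℕ ↦ (n.factorial : ℝ)⁻¹ * t ^ n * (X ω ^ n * Real.exp (c * X ω))) =
          fun n : ℕ ↦ (t * X ω) ^ n / n.factorial * Real.exp (c * X ω) := by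
        ext n
        rw [mul_pow]
        ring
      exact hfun ▸ this
    rw [← h.tsum_eq, ENNReal.ofReal_tsum_of_nonneg (fun n ↦ by positivity) h.summable]
  refine ⟨by fun_prop, ?_⟩
  rw [hasFiniteIntegral_iff_ofReal (ae_of_all _ fun ω ↦ (Real.exp_pos _).le),
    lintegral_congr_ae hexp, lintegral_tsum (fun n ↦ by fun_prop)]
  simp_rw [← fun n ↦ ofReal_integral_eq_lintegral_ofReal ((h_int n).const_mul _) (hnonneg n)]
  exact hsum.tsum_ofReal_lt_top

lemma mul_complexMGF_eqOn {N D : ℂ → ℂ} (hN : Differentiable ℂ N) (hD : Differentiable ℂ D)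
    {a b : ℝ} (hb : Set.Iio b ⊆ integrableExpSet X μ)
    (heq : ∀ z : ℂ, z.re < a → D z * complexMGF X μ z = N z) {z : ℂ} (hz : z.re < b) :
    D z * complexMGF X μ z = N z := by
  have hopen : IsOpen {z : ℂ | z.re < b} := isOpen_lt Complex.continuous_re continuous_const
  have hb' : Set.Iio b ⊆ interior (integrableExpSet X μ) := interior_maximal hb isOpen_Iio
  have hM : DifferentiableOn ℂ (complexMGF X μ) {z : ℂ | z.re < b} :=
    differentiableOn_complexMGF.mono fun w hw ↦ hb' hw
  have h₀ : ((min a b - 1 : ℝ) : ℂ) ∈ {z : ℂ | z.re < b} := by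
    have := min_le_right a b
    simp only [Set.mem_ofPred_eq, Complex.ofReal_re]
    linarith
  refine ((hD.differentiableOn.mul hM).analyticOnNhd hopen).eqOn_of_preconnected_of_eventuallyEq
    (hN.differentiableOn.analyticOnNhd hopen)
    (convex_halfSpace_re_lt b).isPreconnected h₀ ?_ hz
  filter_upwards [(isOpen_lt Complex.continuous_re continuous_const).mem_nhds
    (show ((min a b - 1 : ℝ) : ℂ) ∈ {z : ℂ | z.re < a} by
      have := min_le_left a b
      simp only [Set.mem_ofPred_eq, Complex.ofReal_re]
      linarith)] with w hw
  exact heq w hw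

/-- **Landau's theorem** for Laplace transforms of positive measures carried by `[0, ∞)`: there is
no obstruction to convergence other than a singularity on the real axis. -/
theorem Iio_subset_integrableExpSet (hX : 0 ≤ᵐ[μ] X) (hXm : AEMeasurable X μ) {N D : ℂ → ℂ}
    (hN : Differentiable ℂ N) (hD : Differentiable ℂ D) {a b : ℝ}
    (ha : Set.Iio a ⊆ integrableExpSet X μ) (hDb : ∀ t : ℝ, t < b → D t ≠ 0)
    (heq : ∀ z : ℂ, z.re < a → D z * complexMGF X μ z = N z) :
    Set.Iio b ⊆ integrableExpSet X μ := by
  have hdown {t u : ℝ} (hut : u ≤ t) (ht : t ∈ integrableExpSet X μ) :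
      u ∈ integrableExpSet X μ := by
    refine Integrable.mono' ht (by fun_prop) ?_
    filter_upwards [hX] with ω hω
    have : 0 ≤ X ω := hω
    rw [Real.norm_eq_abs, Real.abs_exp]
    gcongr
  by_contra hcon
  obtain ⟨u, hub, hu⟩ := Set.not_subset.mp hcon
  have hbdd : BddAbove (integrableExpSet X μ) :=
    ⟨u, fun t ht ↦ le_of_not_gt fun hlt ↦ hu (hdown hlt.le ht)⟩
  have hne : (integrableExpSet X μ).Nonempty := ⟨a - 1, ha (by simp)⟩
  set σ := sSup (integrableExpSet X μ) with hσ
  have hσu : σ ≤ u := csSup_le hne fun t ht ↦ le_of_not_gt fun hlt ↦ hu (hdown hlt.le ht)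
  have hσS : Set.Iio σ ⊆ integrableExpSet X μ := fun t ht ↦ by
    obtain ⟨v, hv, htv⟩ := exists_lt_of_lt_csSup hne ht
    exact hdown htv.le hv
  obtain ⟨δ, hδ, hball⟩ := Metric.isOpen_iff.mp
    (isOpen_ne_fun hD.continuous continuous_const) (σ : ℂ) (hDb σ (hσu.trans_lt hub))
  have hsub : Metric.ball ((σ - δ / 4 : ℝ) : ℂ) (δ / 2) ⊆ {z | D z ≠ 0} := by
    refine (Metric.ball_subset_ball' ?_).trans hball
    rw [Complex.dist_eq, ← Complex.ofReal_sub, Complex.norm_real, Real.norm_eq_abs,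
      abs_of_neg (by linarith)]
    linarith
  have hmem : σ - δ / 4 ∈ interior (integrableExpSet X μ) :=
    interior_maximal hσS isOpen_Iio (by simpa using hδ)
  have hnew : σ - δ / 4 + 3 * δ / 8 ∈ integrableExpSet X μ := by
    refine add_mem_integrableExpSet_of_differentiableOn_ball hX hmem (r := δ / 2)
      (H := fun z ↦ N z / D z) (hN.differentiableOn.div hD.differentiableOn hsub) ?_
      (by linarith) (by linarith)
    filter_upwards [Metric.ball_mem_nhds ((σ - δ / 4 : ℝ) : ℂ) (half_pos hδ),
      (isOpen_lt Complex.continuous_re continuous_const).mem_nhds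
        (show ((σ - δ / 4 : ℝ) : ℂ) ∈ {z : ℂ | z.re < σ} by simpa using hδ)] with z hz hzσ
    rw [eq_div_iff (hsub hz), mul_comm]
    exact mul_complexMGF_eqOn hN hD hσS heq hzσ
  have := le_csSup hbdd hnew
  linarith

end Landau

section MellinTransform

/-- The measure on `(1, ∞)` with density `A x / x`, for which the moment generating function of
`log` at `-s` is `∫ x in (1, ∞), A x * x ^ (-(s + 1))`. -/
noncomputable def mellinMeasure (A : ℝ → ℝ) : Measure ℝ :=
  (volume.restrict (Set.Ioi 1)).withDensity fun x ↦ ENNReal.ofReal (A x / x)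

variable {A : ℝ → ℝ}

lemma log_nonneg_ae_mellinMeasure : 0 ≤ᵐ[mellinMeasure A] Real.log := by
  refine (withDensity_absolutelyContinuous _ _).ae_le ?_
  filter_upwards [ae_restrict_mem measurableSet_Ioi] with x hx
  exact Real.log_nonneg (le_of_lt hx)

lemma mem_integrableExpSet_mellinMeasure (hA : Measurable A) (hA0 : ∀ x > 1, 0 ≤ A x) {t : ℝ} :
    t ∈ integrableExpSet Real.log (mellinMeasure A) ↔
      IntegrableOn (fun x ↦ A x * x ^ (t - 1)) (Set.Ioi 1) := by
  change Integrable _ _ ↔ _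
  rw [mellinMeasure, integrable_withDensity_iff_integrable_smul' (by fun_prop)
    (ae_of_all _ fun _ ↦ ENNReal.ofReal_lt_top)]
  refine integrable_congr ?_
  filter_upwards [ae_restrict_mem measurableSet_Ioi] with x hx
  have hx0 : (0 : ℝ) < x := zero_lt_one.trans hx
  rw [ENNReal.toReal_ofReal (div_nonneg (hA0 x hx) hx0.le), smul_eq_mul, Real.rpow_sub_one hx0.ne',
    Real.rpow_def_of_pos hx0, mul_comm t]
  ring

lemma complexMGF_log_mellinMeasure (hA : Measurable A) (hA0 : ∀ x > 1, 0 ≤ A x) (s : ℂ) :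
    complexMGF Real.log (mellinMeasure A) (-s) =
      ∫ x in Set.Ioi (1 : ℝ), (A x : ℂ) * (x : ℂ) ^ (-(s + 1)) := by
  rw [complexMGF, mellinMeasure, integral_withDensity_eq_integral_toReal_smul (by fun_prop)
    (ae_of_all _ fun _ ↦ ENNReal.ofReal_lt_top)]
  refine setIntegral_congr_fun measurableSet_Ioi fun x hx ↦ ?_
  have hx0 : (0 : ℝ) < x := zero_lt_one.trans hx
  have hx0' : (x : ℂ) ≠ 0 := by exact_mod_cast hx0.ne'
  rw [ENNReal.toReal_ofReal (div_nonneg (hA0 x hx) hx0.le), Complex.real_smul,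
    show -(s + 1) = -s - 1 by ring, Complex.cpow_sub _ _ hx0', Complex.cpow_one,
    Complex.cpow_def_of_ne_zero hx0', ← Complex.ofReal_log hx0.le, mul_comm (-s)]
  push_cast
  ring

lemma integrableOn_mul_rpow_of_le (hA : Measurable A) (hA0 : ∀ x > 1, 0 ≤ A x) {K r t : ℝ}
    (hK : ∀ x > 1, A x ≤ K * x ^ r) (ht : t + r < 0) :
    IntegrableOn (fun x ↦ A x * x ^ (t - 1)) (Set.Ioi 1) := by
  refine Integrable.mono' ((integrableOn_Ioi_rpow_of_lt (show t + r - 1 < -1 by linarith)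
    zero_lt_one).const_mul K) (by fun_prop) ?_
  filter_upwards [ae_restrict_mem measurableSet_Ioi] with x hx
  have hx0 : (0 : ℝ) < x := zero_lt_one.trans hx
  rw [Real.norm_of_nonneg (mul_nonneg (hA0 x hx) (by positivity)),
    show t + r - 1 = r + (t - 1) by ring, Real.rpow_add hx0, ← mul_assoc]
  exact mul_le_mul_of_nonneg_right (hK x hx) (by positivity)

lemma integral_Ioi_one_cpow {w : ℂ} {r : ℝ} (h : r < w.re) :
    ∫ x in Set.Ioi (1 : ℝ), ((x ^ r : ℝ) : ℂ) * (x : ℂ) ^ (-(w + 1)) = 1 / (w - r) := by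
  have hcongr : ∫ x in Set.Ioi (1 : ℝ), ((x ^ r : ℝ) : ℂ) * (x : ℂ) ^ (-(w + 1)) =
      ∫ x in Set.Ioi (1 : ℝ), (x : ℂ) ^ (r - w - 1) := by
    refine setIntegral_congr_fun measurableSet_Ioi fun x hx ↦ ?_
    have hx0 : (0 : ℝ) < x := zero_lt_one.trans hx
    have hx0' : (x : ℂ) ≠ 0 := by exact_mod_cast hx0.ne'
    rw [Complex.ofReal_cpow hx0.le, ← Complex.cpow_add _ _ hx0']
    ring_nf
  rw [hcongr, integral_Ioi_cpow_of_lt (by simp; linarith) zero_lt_one]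
  rw [show (r : ℂ) - w - 1 + 1 = -(w - r) by ring, neg_div_neg_eq, Complex.ofReal_one,
    Complex.one_cpow]

lemma integrableOn_Ioi_one_cpow {w : ℂ} {r : ℝ} (h : r < w.re) :
    IntegrableOn (fun x : ℝ ↦ ((x ^ r : ℝ) : ℂ) * (x : ℂ) ^ (-(w + 1))) (Set.Ioi 1) := by
  have hcongr : IntegrableOn (fun x : ℝ ↦ (x : ℂ) ^ (r - w - 1)) (Set.Ioi 1) :=
    integrableOn_Ioi_cpow_of_lt (by simp; linarith) zero_lt_one
  refine hcongr.congr_fun (fun x hx ↦ ?_) measurableSet_Ioi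
  have hx0 : (0 : ℝ) < x := zero_lt_one.trans hx
  have hx0' : (x : ℂ) ≠ 0 := by exact_mod_cast hx0.ne'
  simp only
  rw [Complex.ofReal_cpow hx0.le, ← Complex.cpow_add _ _ hx0']
  ring_nf

lemma integrableOn_ofReal_mul_cpow {f : ℝ → ℝ} (hf : Measurable f) {K r : ℝ}
    (hK : ∀ x > 1, |f x| ≤ K * x ^ r) {w : ℂ} (h : r < w.re) :
    IntegrableOn (fun x : ℝ ↦ (f x : ℂ) * (x : ℂ) ^ (-(w + 1))) (Set.Ioi 1) := by
  refine Integrable.mono' ((integrableOn_Ioi_one_cpow h).norm.const_mul K) (by fun_prop) ?_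
  filter_upwards [ae_restrict_mem measurableSet_Ioi] with x hx
  have hx0 : (0 : ℝ) < x := zero_lt_one.trans hx
  rw [norm_mul, norm_mul, Complex.norm_real, Complex.norm_real, ← mul_assoc, Real.norm_eq_abs,
    Real.norm_of_nonneg (Real.rpow_nonneg hx0.le r)]
  exact mul_le_mul_of_nonneg_right (hK x hx) (norm_nonneg _)

end MellinTransform

section Zeta

/-- The entire function `(s - 1) ζ(s)`. -/
noncomputable def zetaRegular : ℂ → ℂ :=
  Function.update (fun s ↦ (s - 1) * riemannZeta s) 1 1

lemma zetaRegular_one : zetaRegular 1 = 1 := by simp [zetaRegular]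

lemma zetaRegular_of_ne_one {s : ℂ} (hs : s ≠ 1) : zetaRegular s = (s - 1) * riemannZeta s := by
  simp [zetaRegular, hs]

lemma differentiable_zetaRegular : Differentiable ℂ zetaRegular := by
  rw [← differentiableOn_univ,
    ← Complex.differentiableOn_compl_singleton_and_continuousAt_iff (c := 1) univ_mem]
  constructor
  · refine DifferentiableOn.congr (f := fun s ↦ (s - 1) * riemannZeta s) (fun s hs ↦ ?_)
      fun s hs ↦ zetaRegular_of_ne_one (by simpa using hs)
    exact ((differentiableAt_id.sub_const 1).mul
      (differentiableAt_riemannZeta (by simpa using hs))).differentiableWithinAt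
  · exact continuousAt_update_same.mpr riemannZeta_residue_one

lemma riemannZeta_eq_mul_integral_floor {s : ℂ} (hs : 1 < s.re) :
    riemannZeta s = s * ∫ x in Set.Ioi (1 : ℝ), ((⌊x⌋₊ : ℝ) : ℂ) * (x : ℂ) ^ (-(s + 1)) := by
  rw [← LSeries_one_eq_riemannZeta hs, LSeries_eq_mul_integral' 1 zero_le_one hs]
  · simp
  · simpa using Asymptotics.isBigO_refl _ _

lemma zetaRegular_eq_sub_mul_complexMGF {s : ℂ} (hs : 0 < s.re) :
    zetaRegular s = s - s * (s - 1) * complexMGF Real.log (mellinMeasure Int.fract) (-s) := by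
  have hfr : ∀ x > (1 : ℝ), 0 ≤ Int.fract x := fun x _ ↦ Int.fract_nonneg x
  have hsub : Set.Iio 0 ⊆ integrableExpSet Real.log (mellinMeasure Int.fract) := fun t ht ↦
    (mem_integrableExpSet_mellinMeasure measurable_fract hfr).mpr
      (integrableOn_mul_rpow_of_le (K := 1) (r := 0) measurable_fract hfr
        (fun x _ ↦ by simpa using (Int.fract_lt_one x).le) (by simpa using ht))
  have heq : ∀ z : ℂ, z.re < -1 → (z * (z + 1)) *
      complexMGF Real.log (mellinMeasure Int.fract) z = -z - zetaRegular (-z) := by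
    intro z hz
    obtain ⟨w, rfl⟩ : ∃ w, z = -w := ⟨-z, by simp⟩
    have hw : 1 < w.re := by simpa using hz
    have hw1 : w ≠ 1 := by rintro rfl; simp at hw
    have h_int : ∫ x in Set.Ioi (1 : ℝ), ((Int.fract x : ℝ) : ℂ) * (x : ℂ) ^ (-(w + 1)) =
        1 / (w - 1) - ∫ x in Set.Ioi (1 : ℝ), ((⌊x⌋₊ : ℝ) : ℂ) * (x : ℂ) ^ (-(w + 1)) := by
      have h1 := integral_Ioi_one_cpow hw
      rw [Complex.ofReal_one] at h1
      rw [← h1, ← integral_sub (integrableOn_Ioi_one_cpow hw)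
        (integrableOn_ofReal_mul_cpow (K := 1) (r := 1) (by fun_prop) _ hw)]
      · refine setIntegral_congr_fun measurableSet_Ioi fun x hx ↦ ?_
        have hx0 : (0 : ℝ) < x := zero_lt_one.trans hx
        simp only [Real.rpow_one]
        rw [← sub_mul, ← Int.self_sub_floor, ← natCast_floor_eq_intCast_floor hx0.le]
        push_cast
        rfl
      · intro x hx
        simpa using Nat.floor_le (zero_lt_one.trans hx).le
    rw [neg_neg, zetaRegular_of_ne_one hw1, complexMGF_log_mellinMeasure measurable_fract hfr, h_int,
      riemannZeta_eq_mul_integral_floor hw]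
    field_simp [sub_ne_zero.mpr hw1]
    ring
  have := mul_complexMGF_eqOn (z := -s) (by have := differentiable_zetaRegular; fun_prop)
    (by fun_prop) hsub heq (by simpa using hs)
  rw [neg_neg] at this
  linear_combination this

lemma riemannZeta_ofReal_ne_zero {t : ℝ} (ht : 0 < t) (ht1 : t < 1) : riemannZeta t ≠ 0 := by
  intro h
  have h1 : (t : ℂ) ≠ 1 := by exact_mod_cast ht1.ne
  have h2 := zetaRegular_eq_sub_mul_complexMGF (s := t) (by simpa using ht)
  rw [zetaRegular_of_ne_one h1, h, mul_zero, ← Complex.ofReal_neg, complexMGF_ofReal] at h2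
  have h3 : 0 = t - t * (t - 1) * mgf Real.log (mellinMeasure Int.fract) (-t) := by
    exact_mod_cast h2
  have := mul_nonneg (mul_pos ht (sub_pos.mpr ht1)).le
    (mgf_nonneg (X := Real.log) (μ := mellinMeasure Int.fract) (t := -t))
  nlinarith

lemma zetaRegular_ofReal_ne_zero {t : ℝ} (ht : 0 < t) : zetaRegular t ≠ 0 := by
  rcases lt_trichotomy t 1 with h | rfl | h
  · have h1 : (t : ℂ) ≠ 1 := by exact_mod_cast h.ne
    rw [zetaRegular_of_ne_one h1]
    exact mul_ne_zero (sub_ne_zero.mpr h1) (riemannZeta_ofReal_ne_zero ht h)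
  · simp [zetaRegular_one]
  · have h1 : (t : ℂ) ≠ 1 := by exact_mod_cast h.ne'
    rw [zetaRegular_of_ne_one h1]
    exact mul_ne_zero (sub_ne_zero.mpr h1)
      (riemannZeta_ne_zero_of_one_lt_re (by simpa using h))

end Zeta

section Squarefree

lemma kFree_two_iff_squarefree {n : ℕ} (hn : n ≠ 0) : KFree 2 n ↔ Squarefree n := by
  refine ⟨fun h d hd ↦ ?_, fun h d hd hdn ↦ ?_⟩
  · rw [Nat.isUnit_iff]
    by_contra hd1
    have hd0 : d ≠ 0 := by rintro rfl; exact hn (by simpa using hd)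
    exact h d (by omega) (by rwa [sq])
  · have := Nat.isUnit_iff.mp (h d (by rwa [← sq]))
    omega

lemma LSeries_squarefree_mul_riemannZeta {s : ℂ} (hs : 1 < s.re) :
    LSeries (fun n ↦ if Squarefree n then 1 else 0) s * riemannZeta (2 * s) = riemannZeta s := by
  set f : ℕ → ℂ := fun n ↦ LSeries.term (fun n ↦ if Squarefree n then 1 else 0) s n with hf
  have hf_eq (n : ℕ) : f n = if Squarefree n then (n : ℂ) ^ (-s) else 0 := by
    rcases eq_or_ne n 0 with rfl | hn
    · simp [hf]
    · simp only [hf, LSeries.term_of_ne_zero hn]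
      split_ifs <;> simp [Complex.cpow_neg]
  have hsum : Summable (‖f ·‖) := by
    refine (LSeriesSummable_of_bounded_of_one_lt_re (m := 1) (fun n _ ↦ ?_) hs).norm
    split_ifs <;> simp
  have hprod := EulerProduct.eulerProduct_hasProd (f := f) (by simp [hf_eq]) (fun {m n} hmn ↦ by
    simp only [hf_eq, Nat.squarefree_mul hmn]
    by_cases hm : Squarefree m <;> by_cases hn : Squarefree n <;>
      simp [hm, hn, Complex.natCast_mul_natCast_cpow]) hsum (by simp [hf])
  have hlocal (p : Nat.Primes) : ∑' e, f (p ^ e) = 1 + (p : ℂ) ^ (-s) := by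
    rw [tsum_eq_sum (s := Finset.range 2)]
    · simp [Finset.sum_range_succ, hf_eq, p.2.squarefree]
    · intro e he
      have he2 : 2 ≤ e := by simpa [Nat.lt_iff_add_one_le] using he
      rw [hf_eq, if_neg]
      rw [Nat.squarefree_pow_iff p.2.ne_one (by omega)]
      omega
  simp_rw [hlocal] at hprod
  have h2 := riemannZeta_eulerProduct_hasProd (s := 2 * s) (by simp; linarith)
  have h3 := riemannZeta_eulerProduct_hasProd hs
  have hfactor (p : Nat.Primes) :
      (1 + (p : ℂ) ^ (-s)) * (1 - (p : ℂ) ^ (-(2 * s)))⁻¹ = (1 - (p : ℂ) ^ (-s))⁻¹ := by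
    have hsq : (p : ℂ) ^ (-(2 * s)) = ((p : ℂ) ^ (-s)) ^ 2 := by
      rw [← Complex.cpow_nat_mul]
      push_cast
      ring_nf
    have hlt : ‖(p : ℂ) ^ (-s)‖ < 1 := by
      rw [Complex.norm_natCast_cpow_of_pos p.2.pos]
      exact Real.rpow_lt_one_of_one_lt_of_neg (by exact_mod_cast p.2.one_lt)
        (by simp only [Complex.neg_re]; linarith)
    generalize (p : ℂ) ^ (-s) = a at hsq hlt ⊢
    have h₁ : 1 + a ≠ 0 := by
      intro h
      rw [eq_neg_of_add_eq_zero_right h] at hlt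
      simp at hlt
    rw [hsq, show 1 - a ^ 2 = (1 + a) * (1 - a) by ring, mul_inv, mul_inv_cancel_left₀ h₁]
  have hmul := hprod.mul h2
  simp_rw [hfactor] at hmul
  exact hmul.unique h3

end Squarefree

section OneSided

lemma Qf_two_eq_sum (x : ℝ) :
    (Qf 2 x : ℝ) = ∑ k ∈ Finset.Icc 1 ⌊x⌋₊, if Squarefree k then 1 else 0 := by
  classical
  rw [Qf, Finset.sum_boole, Nat.cast_inj]
  congr 1
  refine Finset.filter_congr fun n hn ↦ kFree_two_iff_squarefree ?_
  have := (Finset.mem_Icc.mp hn).1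
  omega

lemma Qf_two_le {x : ℝ} (hx : 0 ≤ x) : (Qf 2 x : ℝ) ≤ x := by
  classical
  refine le_trans ?_ (Nat.floor_le hx)
  rw [Nat.cast_le, Qf]
  exact (Finset.card_filter_le _ _).trans (by simp)

lemma measurable_Qf_two : Measurable fun x ↦ (Qf 2 x : ℝ) := by
  simp_rw [Qf_two_eq_sum]
  exact (measurable_from_nat (f := fun n ↦
    ∑ k ∈ Finset.Icc 1 n, if Squarefree k then (1 : ℝ) else 0)).comp Nat.measurable_floor

lemma measurable_Rf_two : Measurable (Rf 2) :=
  measurable_Qf_two.sub (measurable_id.div_const _)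

lemma riemannZeta_two_re_pos : 0 < (riemannZeta (2 : ℕ)).re := by
  exact_mod_cast riemannZeta_re_pos_of_one_lt (x := 2) one_lt_two

lemma ofReal_riemannZeta_two_re : ((riemannZeta (2 : ℕ)).re : ℂ) = riemannZeta 2 := by
  have := riemannZeta_im_eq_zero_of_one_lt (x := 2) one_lt_two
  apply Complex.ext <;> simp_all

lemma abs_Rf_two_le {x : ℝ} (hx : 0 ≤ x) :
    |Rf 2 x| ≤ (1 + 1 / (riemannZeta (2 : ℕ)).re) * x := by
  have h1 := Qf_two_le hx
  have h2 : (0 : ℝ) ≤ Qf 2 x := Nat.cast_nonneg _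
  have h3 := div_nonneg hx riemannZeta_two_re_pos.le
  rw [Rf, abs_le, add_mul, one_mul, one_div_mul_eq_div]
  constructor <;> linarith

lemma integral_Rf_two {s : ℂ} (hs : 1 < s.re) :
    ∫ x in Set.Ioi (1 : ℝ), (Rf 2 x : ℂ) * (x : ℂ) ^ (-(s + 1)) =
      riemannZeta s / (s * riemannZeta (2 * s)) - 1 / riemannZeta 2 * (1 / (s - 1)) := by
  have hs0 : s ≠ 0 := by rintro rfl; norm_num at hs
  have hL := LSeries_squarefree_mul_riemannZeta hs
  have hz : riemannZeta (2 * s) ≠ 0 := riemannZeta_ne_zero_of_one_lt_re (by simp; linarith)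
  have hbd (x : ℝ) (hx : x > 1) : |(Qf 2 x : ℝ)| ≤ 1 * x ^ (1 : ℝ) := by
    simpa using Qf_two_le (zero_lt_one.trans hx).le
  have hI : LSeries (fun n ↦ if Squarefree n then 1 else 0) s =
      s * ∫ x in Set.Ioi (1 : ℝ), ((Qf 2 x : ℝ) : ℂ) * (x : ℂ) ^ (-(s + 1)) := by
    rw [LSeries_eq_mul_integral' _ zero_le_one hs]
    · simp [Qf_two_eq_sum]
    · refine Asymptotics.IsBigO.of_bound 1 (Eventually.of_forall fun n ↦ ?_)
      rw [Real.norm_of_nonneg (Finset.sum_nonneg fun _ _ ↦ norm_nonneg _)]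
      refine (Finset.sum_le_card_nsmul _ _ 1 fun k _ ↦ ?_).trans ?_
      · split_ifs <;> simp
      · simp
  have h1 := integral_Ioi_one_cpow hs
  rw [Complex.ofReal_one] at h1
  have hdiff : ∫ x in Set.Ioi (1 : ℝ), (Rf 2 x : ℂ) * (x : ℂ) ^ (-(s + 1)) =
      (∫ x in Set.Ioi (1 : ℝ), ((Qf 2 x : ℝ) : ℂ) * (x : ℂ) ^ (-(s + 1))) -
        1 / riemannZeta 2 * (1 / (s - 1)) := by
    rw [← h1, ← integral_const_mul, ← integral_sub
      (integrableOn_ofReal_mul_cpow measurable_Qf_two hbd hs)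
      ((integrableOn_Ioi_one_cpow hs).const_mul _)]
    refine integral_congr_ae (ae_of_all _ fun x ↦ ?_)
    simp only [Rf, Real.rpow_one]
    rw [← ofReal_riemannZeta_two_re]
    push_cast
    ring
  rw [hdiff, ← hL, hI, mul_div_mul_right _ _ hz, mul_div_cancel_left₀ _ hs0]

/-- A one-sided bound for the counting error forces zeros of `ζ(2s)` to be zeros of `ζ(s)` in
the half-plane `Re s > 1/4`. -/
lemma riemannZeta_half_eq_zero {ε C : ℝ} (hε : ε ≠ 0)
    (hA0 : ∀ x > 1, 0 ≤ C * x ^ (1 / 4 : ℝ) - ε * Rf 2 x) {ρ : ℂ} (hρ : riemannZeta ρ = 0)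
    (hρ2 : 1 / 2 < ρ.re) (hρ1 : ρ.re < 1) : riemannZeta (ρ / 2) = 0 := by
  set A : ℝ → ℝ := fun x ↦ C * x ^ (1 / 4 : ℝ) - ε * Rf 2 x with hA
  have hAm : Measurable A := by
    have := measurable_Rf_two
    fun_prop
  set N : ℂ → ℂ := fun s ↦ C * s * (s - 1) * zetaRegular (2 * s) -
    ε * (s - (1 / 4 : ℝ)) * ((2 * s - 1) * zetaRegular s - s * zetaRegular (2 * s) / riemannZeta 2)
    with hN
  set D : ℂ → ℂ := fun s ↦ s * (s - (1 / 4 : ℝ)) * zetaRegular (2 * s) with hD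
  have hZ := differentiable_zetaRegular
  have hNd : Differentiable ℂ N := by fun_prop
  have hDd : Differentiable ℂ D := by fun_prop
  have hζ2 : riemannZeta 2 ≠ 0 := riemannZeta_ne_zero_of_one_lt_re (by norm_num)
  have hN1 : N 1 = 0 := by
    simp only [hN, zetaRegular_one, mul_one]
    rw [zetaRegular_of_ne_one (by norm_num)]
    field_simp
    ring
  have hds : Differentiable ℂ (dslope N 1) := by
    rw [← differentiableOn_univ, Complex.differentiableOn_dslope univ_mem]
    exact hNd.differentiableOn
  have hmul (s : ℂ) : (s - 1) * dslope N 1 s = N s := by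
    simpa [hN1] using sub_smul_dslope N 1 s
  have hbound (x : ℝ) (hx : x > 1) :
      A x ≤ (|C| + |ε| * (1 + 1 / (riemannZeta (2 : ℕ)).re)) * x ^ (1 : ℝ) := by
    have hx0 : 0 ≤ x := (zero_lt_one.trans hx).le
    have h1 : C * x ^ (1 / 4 : ℝ) ≤ |C| * x ^ (1 : ℝ) := by
      gcongr
      · exact le_abs_self C
      · exact hx.le
      · norm_num
    have h2 : -(ε * Rf 2 x) ≤ |ε| * ((1 + 1 / (riemannZeta (2 : ℕ)).re) * x) := by
      refine (neg_le_abs _).trans ?_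
      rw [abs_mul]
      gcongr
      exact abs_Rf_two_le hx0
    rw [Real.rpow_one] at *
    simp only [hA]
    linarith
  have ha : Set.Iio (-1) ⊆ integrableExpSet Real.log (mellinMeasure A) := fun t ht ↦
    (mem_integrableExpSet_mellinMeasure hAm hA0).mpr
      (integrableOn_mul_rpow_of_le hAm hA0 hbound (by simp at ht; linarith))
  have heq : ∀ z : ℂ, z.re < -1 →
      D (-z) * complexMGF Real.log (mellinMeasure A) z = dslope N 1 (-z) := by
    intro z hz
    obtain ⟨s, rfl⟩ : ∃ s, z = -s := ⟨-z, by simp⟩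
    have hs : 1 < s.re := by simpa using hz
    have hs0 : s ≠ 0 := by rintro rfl; norm_num at hs
    have hs1 : s ≠ 1 := by rintro rfl; simp at hs
    have h2s1 : 2 * s ≠ 1 := by
      intro h
      have := congrArg Complex.re h
      simp at this
      linarith
    have hs4 : s - (1 / 4 : ℝ) ≠ 0 := by
      intro h
      have := congrArg Complex.re h
      simp at this
      linarith
    have hs4' : (1 / 4 : ℝ) < s.re := by linarith
    have hz2 : riemannZeta (2 * s) ≠ 0 := riemannZeta_ne_zero_of_one_lt_re (by simp; linarith)
    have h_int : ∫ x in Set.Ioi (1 : ℝ), (A x : ℂ) * (x : ℂ) ^ (-(s + 1)) =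
        C * (1 / (s - (1 / 4 : ℝ))) - ε * (riemannZeta s / (s * riemannZeta (2 * s)) -
          1 / riemannZeta 2 * (1 / (s - 1))) := by
      rw [← integral_Rf_two hs, ← integral_Ioi_one_cpow hs4', ← integral_const_mul,
        ← integral_const_mul, ← integral_sub ((integrableOn_Ioi_one_cpow hs4').const_mul _)
          ((integrableOn_ofReal_mul_cpow (r := 1) measurable_Rf_two (fun x hx ↦ by
            simpa using abs_Rf_two_le (zero_lt_one.trans hx).le) hs).const_mul _)]
      refine integral_congr_ae (ae_of_all _ fun x ↦ ?_)
      simp only [hA]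
      push_cast
      ring
    rw [neg_neg, complexMGF_log_mellinMeasure hAm hA0, h_int]
    refine mul_left_cancel₀ (sub_ne_zero.mpr hs1) ?_
    rw [hmul]
    simp only [hD, hN, zetaRegular_of_ne_one hs1, zetaRegular_of_ne_one h2s1]
    have := sub_ne_zero.mpr hs1
    generalize riemannZeta (2 * s) = ζ₂ at hz2 ⊢
    field_simp
  have hb : Set.Iio (-(1 / 4)) ⊆ integrableExpSet Real.log (mellinMeasure A) := by
    refine Iio_subset_integrableExpSet log_nonneg_ae_mellinMeasure
      Real.measurable_log.aemeasurable (hds.comp differentiable_neg) (hDd.comp differentiable_neg)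
      ha (fun t ht ↦ ?_) heq
    have h1 : zetaRegular ((2 * -t : ℝ) : ℂ) ≠ 0 := zetaRegular_ofReal_ne_zero (by linarith)
    have h2 : ((-t * (-t - 1 / 4) : ℝ) : ℂ) ≠ 0 := by
      rw [Complex.ofReal_ne_zero]
      exact mul_ne_zero (by linarith) (by linarith)
    have h3 := mul_ne_zero h2 h1
    simp only [Function.comp, hD]
    convert h3 using 2 <;> push_cast <;> ring
  have hfin := mul_complexMGF_eqOn (hds.comp differentiable_neg) (hDd.comp differentiable_neg) hb
    heq (z := -(ρ / 2)) (by simp; linarith)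
  simp only [Function.comp, neg_neg] at hfin
  have hρ_ne : ρ ≠ 1 := by rintro rfl; simp at hρ1
  have hρ'_ne : ρ / 2 ≠ 1 := by
    intro h
    have := congrArg Complex.re h
    simp at this
    linarith
  have hρ4 : ρ / 2 - (1 / 4 : ℝ) ≠ 0 := by
    intro h
    have := congrArg Complex.re h
    simp at this
    linarith
  have hZρ : zetaRegular (2 * (ρ / 2)) = 0 := by
    rw [mul_div_cancel₀ _ two_ne_zero, zetaRegular_of_ne_one hρ_ne, hρ, mul_zero]
  have hNρ : N (ρ / 2) = 0 := by
    rw [← hmul, ← hfin]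
    simp [hD, hZρ]
  simp only [hN, hZρ, mul_zero, zero_sub, zero_div, sub_zero, neg_eq_zero, mul_eq_zero] at hNρ
  rw [mul_div_cancel₀ _ two_ne_zero, zetaRegular_of_ne_one hρ'_ne, mul_eq_zero] at hNρ
  simpa only [Complex.ofReal_eq_zero, hε, hρ4, sub_ne_zero.mpr hρ_ne, sub_ne_zero.mpr hρ'_ne,
    false_or] using hNρ

lemma riemannZeta_one_sub_eq_zero {s : ℂ} (hs : riemannZeta s = 0) (h0 : 0 < s.re)
    (h1 : s.re < 1) : riemannZeta (1 - s) = 0 := by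
  rw [riemannZeta_one_sub, hs, mul_zero]
  · rintro n rfl
    simp at h0
    linarith [n.cast_nonneg (α := ℝ)]
  · rintro rfl
    simp at h1

/-- If halving maps zeros of `ζ` with `1/2 < Re ρ < 1` to zeros of `ζ`, there are none: iterating
`ρ ↦ 1 - ρ / 2` produces zeros converging to the real point `2/3`. -/
lemma riemannZeta_ne_zero_of_half_zero
    (hhalf : ∀ ρ : ℂ, riemannZeta ρ = 0 → 1 / 2 < ρ.re → ρ.re < 1 → riemannZeta (ρ / 2) = 0)
    {ρ : ℂ} (h2 : 1 / 2 < ρ.re) (h1 : ρ.re < 1) : riemannZeta ρ ≠ 0 := by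
  intro hρ
  set u : ℕ → ℂ := fun n ↦ (fun z ↦ 1 - z / 2)^[n] ρ with hu
  have hsucc (n : ℕ) : u (n + 1) = 1 - u n / 2 := Function.iterate_succ_apply' _ _ _
  have hzero (n : ℕ) : riemannZeta (u n) = 0 ∧ 1 / 2 < (u n).re ∧ (u n).re < 1 := by
    induction n with
    | zero => exact ⟨hρ, h2, h1⟩
    | succ n ih =>
      obtain ⟨ih0, ih2, ih1⟩ := ih
      rw [hsucc]
      refine ⟨riemannZeta_one_sub_eq_zero (hhalf _ ih0 ih2 ih1) ?_ ?_, ?_, ?_⟩ <;> simp <;> linarith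
  have hform (n : ℕ) : u n = 2 / 3 + (-1 / 2) ^ n * (ρ - 2 / 3) := by
    induction n with
    | zero => simp [hu]
    | succ n ih =>
      rw [hsucc, ih]
      ring
  have hlim : Tendsto u atTop (𝓝 (2 / 3)) := by
    have hpow : Tendsto (fun n : ℕ ↦ (-1 / 2 : ℂ) ^ n) atTop (𝓝 0) :=
      tendsto_pow_atTop_nhds_zero_of_norm_lt_one (by norm_num)
    have := (hpow.mul_const (ρ - 2 / 3)).const_add (2 / 3)
    rw [zero_mul, add_zero] at this
    exact this.congr fun n ↦ (hform n).symm
  have hcont := ((differentiableAt_riemannZeta (s := 2 / 3) (by norm_num)).continuousAt.tendsto.comp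
    hlim).congr fun n ↦ (hzero n).1
  have hval : riemannZeta (2 / 3) = 0 := (tendsto_const_nhds_iff.mp hcont).symm
  have hne := riemannZeta_ofReal_ne_zero (t := 2 / 3) (by norm_num) (by norm_num)
  push_cast at hne
  exact hne hval

lemma exists_bound_of_eventually_le {ε C : ℝ}
    (h : ∀ᶠ x : ℝ in atTop, ε * Rf 2 x ≤ C * x ^ (1 / 4 : ℝ)) :
    ∃ B : ℝ, ∀ x > 1, 0 ≤ B * x ^ (1 / 4 : ℝ) - ε * Rf 2 x := by
  obtain ⟨Y, hY⟩ := eventually_atTop.mp h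
  set K := |ε| * ((1 + 1 / (riemannZeta (2 : ℕ)).re) * |Y|) with hK
  have hpos := riemannZeta_two_re_pos
  have hK0 : 0 ≤ K := by positivity
  refine ⟨|C| + K, fun x hx ↦ ?_⟩
  have hx0 : 0 ≤ x := (zero_lt_one.trans hx).le
  have hx1 : 1 ≤ x ^ (1 / 4 : ℝ) := Real.one_le_rpow hx.le (by norm_num)
  have hC : C * x ^ (1 / 4 : ℝ) ≤ |C| * x ^ (1 / 4 : ℝ) := by
    gcongr
    exact le_abs_self C
  have hKx : K ≤ K * x ^ (1 / 4 : ℝ) := le_mul_of_one_le_right hK0 hx1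
  rcases le_total Y x with hYx | hYx
  · have := hY x hYx
    linarith
  · have h1 : ε * Rf 2 x ≤ K := by
      refine (le_abs_self _).trans ?_
      rw [abs_mul, hK]
      gcongr
      refine (abs_Rf_two_le hx0).trans ?_
      gcongr
      exact hYx.trans (le_abs_self Y)
    have h2 : 0 ≤ |C| * x ^ (1 / 4 : ℝ) := by positivity
    linarith

end OneSided

theorem R2_one_sided_bound_implies_RH
    (h : (∃ C : ℝ, 0 < C ∧ ∀ᶠ x : ℝ in atTop, Rf 2 x ≤ C * x ^ ((1 : ℝ) / 4)) ∨
         (∃ C : ℝ, 0 < C ∧ ∀ᶠ x : ℝ in atTop, -C * x ^ ((1 : ℝ) / 4) ≤ Rf 2 x)) :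
    ∀ s : ℂ, riemannZeta s = 0 → 0 < s.re → s.re < 1 → s.re = 1 / 2 := by
  obtain ⟨ε, hε, C, hC⟩ : ∃ ε : ℝ, ε ≠ 0 ∧ ∃ C : ℝ,
      ∀ x > 1, 0 ≤ C * x ^ (1 / 4 : ℝ) - ε * Rf 2 x := by
    rcases h with ⟨C, -, hC⟩ | ⟨C, -, hC⟩
    · exact ⟨1, one_ne_zero, exists_bound_of_eventually_le (C := C) (by simpa using hC)⟩
    · refine ⟨-1, by norm_num, exists_bound_of_eventually_le (C := C) ?_⟩
      filter_upwards [hC] with x hx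
      linarith
  have hne {ρ : ℂ} (h2 : 1 / 2 < ρ.re) (h1 : ρ.re < 1) : riemannZeta ρ ≠ 0 :=
    riemannZeta_ne_zero_of_half_zero (fun _ ↦ riemannZeta_half_eq_zero hε hC) h2 h1
  intro s hs h0 h1
  rcases lt_trichotomy s.re (1 / 2) with hlt | heq | hgt
  · exact absurd (riemannZeta_one_sub_eq_zero hs h0 h1)
      (hne (by simp only [Complex.sub_re, Complex.one_re]; linarith) (by simpa using h0))
  · exact heq
  · exact absurd hs (hne hgt h1)
end

section
/- For every integer k ≥ 2, if R_k(x) = O(x^{1/(2k)}) as x → ∞, then the Riemann zeta function has no zeros with real part greater than 1/2. -/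
open Filter MeasureTheory Finset

/-- Functions holomorphic on a half-plane and equal far to the right are equal. -/
lemma eqOn_halfPlane_of_eqOn_one_lt_re {F G : ℂ → ℂ} {a : ℝ}
    (hF : DifferentiableOn ℂ F {s | a < s.re}) (hG : DifferentiableOn ℂ G {s | a < s.re})
    (hFG : ∀ s : ℂ, 1 < s.re → F s = G s) : Set.EqOn F G {s | a < s.re} := by
  have ho (b : ℝ) : IsOpen {s : ℂ | b < s.re} := isOpen_lt continuous_const Complex.continuous_re
  have hc : IsPreconnected {s : ℂ | a < s.re} := (convex_halfSpace_re_gt a).isPreconnected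
  refine (hF.analyticOnNhd (ho a)).eqOn_of_preconnected_of_eventuallyEq
    (hG.analyticOnNhd (ho a)) hc (z₀ := ((max a 1 + 1 : ℝ) : ℂ)) ?_ ?_
  · simp only [Set.mem_ofPred_eq, Complex.ofReal_re]
    linarith [le_max_left a 1]
  · refine Filter.eventuallyEq_of_mem ((ho 1).mem_nhds ?_) hFG
    simp only [Set.mem_ofPred_eq, Complex.ofReal_re]
    linarith [le_max_right a 1]

section MellinRepresentation

/-- The error term `∑ n ≤ t, f n - c t`, cut off to `t > 1`. -/
noncomputable def truncatedError (f : ℕ → ℂ) (c : ℂ) : ℝ → ℂ :=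
  (Set.Ioi 1).indicator fun t => ∑ n ∈ Icc 1 ⌊t⌋₊, f n - c * t

variable {f : ℕ → ℂ} {c : ℂ}

lemma locallyIntegrable_truncatedError (hf : ∀ n, ‖f n‖ ≤ 1) :
    LocallyIntegrable (truncatedError f c) := by
  have hg : LocallyIntegrable (fun t : ℝ => (1 + ‖c‖) * |t|) volume :=
    Continuous.locallyIntegrable (by fun_prop)
  refine hg.mono ?_ (.of_forall fun t => ?_)
  · refine (Measurable.indicator ?_ measurableSet_Ioi).aestronglyMeasurable
    refine Measurable.sub ?_ (by fun_prop)
    exact (measurable_of_countable (fun m : ℕ => ∑ n ∈ Icc 1 m, f n)).comp Nat.measurable_floor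
  · rw [truncatedError, Real.norm_eq_abs, abs_of_nonneg (by positivity : 0 ≤ (1 + ‖c‖) * |t|)]
    by_cases ht : t ∈ Set.Ioi (1 : ℝ)
    · have ht0 : (0 : ℝ) ≤ t := by have : 1 < t := ht; linarith
      rw [Set.indicator_of_mem ht, abs_of_nonneg ht0]
      calc ‖∑ n ∈ Icc 1 ⌊t⌋₊, f n - c * t‖ ≤ ‖∑ n ∈ Icc 1 ⌊t⌋₊, f n‖ + ‖c * t‖ := norm_sub_le _ _
        _ ≤ t + ‖c‖ * t := by
          gcongr
          · calc ‖∑ n ∈ Icc 1 ⌊t⌋₊, f n‖ ≤ ∑ n ∈ Icc 1 ⌊t⌋₊, (1 : ℝ) :=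
                norm_sum_le_of_le _ fun n _ => hf n
              _ = ⌊t⌋₊ := by simp
              _ ≤ t := Nat.floor_le ht0
          · simp [abs_of_nonneg ht0]
        _ = (1 + ‖c‖) * t := by ring
    · rw [Set.indicator_of_notMem ht, norm_zero]
      positivity

lemma truncatedError_isBigO_nhds_zero (b : ℝ) :
    truncatedError f c =O[nhdsWithin 0 (Set.Ioi 0)] fun t : ℝ => t ^ b := by
  have h0 : truncatedError f c =ᶠ[nhdsWithin 0 (Set.Ioi 0)] fun _ => 0 := by
    filter_upwards [nhdsWithin_le_nhds (Iio_mem_nhds (zero_lt_one (α := ℝ)))] with t ht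
    exact Set.indicator_of_notMem (by simpa using le_of_lt ht) _
  exact h0.trans_isBigO (Asymptotics.isBigO_zero _ _)

lemma truncatedError_isBigO_atTop {a : ℝ}
    (hE : (fun t : ℝ => ∑ n ∈ Icc 1 ⌊t⌋₊, f n - c * t) =O[atTop] fun t : ℝ => t ^ a) :
    truncatedError f c =O[atTop] fun t : ℝ => t ^ (-(-a)) := by
  have h0 : truncatedError f c =ᶠ[atTop] fun t : ℝ => ∑ n ∈ Icc 1 ⌊t⌋₊, f n - c * t := by
    filter_upwards [eventually_gt_atTop (1 : ℝ)] with t ht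
    exact Set.indicator_of_mem ht _
  simpa only [neg_neg] using h0.trans_isBigO hE

lemma mellinConvergent_truncatedError (hf : ∀ n, ‖f n‖ ≤ 1) {a : ℝ}
    (hE : (fun t : ℝ => ∑ n ∈ Icc 1 ⌊t⌋₊, f n - c * t) =O[atTop] fun t : ℝ => t ^ a)
    {s : ℂ} (hs : a < s.re) : MellinConvergent (truncatedError f c) (-s) :=
  mellinConvergent_of_isBigO_rpow ((locallyIntegrable_truncatedError hf).locallyIntegrableOn _)
    (truncatedError_isBigO_atTop hE) (by simpa using hs)
    (truncatedError_isBigO_nhds_zero (-((-s).re - 1))) (by linarith)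

lemma differentiableAt_mellin_truncatedError (hf : ∀ n, ‖f n‖ ≤ 1) {a : ℝ}
    (hE : (fun t : ℝ => ∑ n ∈ Icc 1 ⌊t⌋₊, f n - c * t) =O[atTop] fun t : ℝ => t ^ a)
    {s : ℂ} (hs : a < s.re) : DifferentiableAt ℂ (mellin (truncatedError f c)) (-s) :=
  mellin_differentiableAt_of_isBigO_rpow
    ((locallyIntegrable_truncatedError hf).locallyIntegrableOn _)
    (truncatedError_isBigO_atTop hE) (by simpa using hs)
    (truncatedError_isBigO_nhds_zero (-((-s).re - 1))) (by linarith)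

lemma mellin_truncatedError (s : ℂ) : mellin (truncatedError f c) s =
    ∫ t in Set.Ioi (1 : ℝ), (t : ℂ) ^ (s - 1) * (∑ n ∈ Icc 1 ⌊t⌋₊, f n - c * t) := by
  have h1 : (fun t : ℝ => (t : ℂ) ^ (s - 1) • truncatedError f c t) =
      (Set.Ioi 1).indicator fun t : ℝ =>
        (t : ℂ) ^ (s - 1) * (∑ n ∈ Icc 1 ⌊t⌋₊, f n - c * t) := by
    ext t
    by_cases ht : t ∈ Set.Ioi (1 : ℝ) <;> simp [truncatedError, ht]
  rw [mellin, h1, setIntegral_indicator measurableSet_Ioi,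
    Set.inter_eq_right.mpr (Set.Ioi_subset_Ioi zero_le_one)]

lemma LSeries_eq_mellin_truncatedError (hf : ∀ n, ‖f n‖ ≤ 1) {a : ℝ} (ha : a < 1)
    (hE : (fun t : ℝ => ∑ n ∈ Icc 1 ⌊t⌋₊, f n - c * t) =O[atTop] fun t : ℝ => t ^ a)
    {s : ℂ} (hs : 1 < s.re) :
    LSeries f s = s * (mellin (truncatedError f c) (-s) + c / (s - 1)) := by
  have hO : (fun n : ℕ => ∑ k ∈ Icc 1 n, ‖f k‖) =O[atTop] fun n : ℕ => (n : ℝ) ^ (1 : ℝ) := by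
    refine Asymptotics.IsBigO.of_bound 1 (.of_forall fun n => ?_)
    rw [Real.norm_of_nonneg (Finset.sum_nonneg fun _ _ => norm_nonneg _)]
    simpa using Finset.sum_le_card_nsmul (Icc 1 n) (fun k => ‖f k‖) 1 fun k _ => hf k
  have hpow : IntegrableOn (fun t : ℝ => (t : ℂ) ^ (-s)) (Set.Ioi 1) :=
    integrableOn_Ioi_cpow_of_lt (by simpa using hs) zero_lt_one
  have hconv := mellinConvergent_truncatedError hf hE (s := s) (ha.trans hs)
  have hconv' : IntegrableOn (fun t : ℝ => (t : ℂ) ^ (-s - 1) * truncatedError f c t)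
      (Set.Ioi 1) := hconv.mono_set (Set.Ioi_subset_Ioi zero_le_one)
  have hint : IntegrableOn
      (fun t : ℝ => (t : ℂ) ^ (-s - 1) * (∑ n ∈ Icc 1 ⌊t⌋₊, f n - c * t)) (Set.Ioi 1) :=
    hconv'.congr_fun (fun t ht => by simp only [truncatedError, Set.indicator_of_mem ht])
      measurableSet_Ioi
  have hs1 : s - 1 ≠ 0 := fun h => by simp [sub_eq_zero.mp h] at hs
  have hs1' : -s + 1 ≠ 0 := fun h => hs1 (by linear_combination -h)
  have hmain : ∫ t in Set.Ioi (1 : ℝ), (t : ℂ) ^ (-s) = 1 / (s - 1) := by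
    rw [integral_Ioi_cpow_of_lt (by simpa using hs) zero_lt_one, Complex.ofReal_one,
      Complex.one_cpow]
    field_simp
    ring
  rw [LSeries_eq_mul_integral' f zero_le_one hs hO, mellin_truncatedError,
    div_eq_mul_one_div c, ← hmain, ← integral_const_mul c, ← integral_add hint (hpow.const_mul c)]
  congr 1
  refine setIntegral_congr_fun measurableSet_Ioi fun t ht => ?_
  have ht0 : (t : ℂ) ≠ 0 := by
    have : (1 : ℝ) < t := ht
    exact_mod_cast (by linarith : t ≠ 0)
  have hexp : (t : ℂ) ^ (-s) = (t : ℂ) ^ (-s - 1) * t := by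
    rw [Complex.cpow_sub _ _ ht0, Complex.cpow_one]
    field_simp
  simp only [hexp, neg_add']
  ring

end MellinRepresentation

lemma riemannZeta₁_eq_sub_one_mul {s : ℂ} (hs : s ≠ 1) :
    riemannZeta₁ s = (s - 1) * riemannZeta s := by
  rw [riemannZeta_eq_inv_sub_mul hs, mul_inv_cancel_left₀ (sub_ne_zero.mpr hs)]

section RealZeros

lemma sum_one_sub_isBigO :
    (fun t : ℝ => ∑ n ∈ Icc 1 ⌊t⌋₊, (1 : ℕ → ℂ) n - 1 * (t : ℂ)) =O[atTop]
      fun t : ℝ => t ^ (0 : ℝ) := by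
  refine Asymptotics.IsBigO.of_bound 1 ?_
  filter_upwards [eventually_ge_atTop (0 : ℝ)] with t ht
  have h1 : ∑ n ∈ Icc 1 ⌊t⌋₊, (1 : ℕ → ℂ) n - 1 * (t : ℂ) = ((⌊t⌋₊ - t : ℝ) : ℂ) := by simp
  rw [h1, Complex.norm_real, Real.norm_eq_abs, Real.rpow_zero, norm_one, mul_one, abs_le]
  exact ⟨by linarith [Nat.lt_floor_add_one t], by linarith [Nat.floor_le ht]⟩

/-- Continuation of `ζ(s) = s / (s - 1) + s ∫ (⌊t⌋ - t) t ^ (-s - 1)` to `0 < re s`. -/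
lemma riemannZeta₁_eq_mellin {s : ℂ} (hs : 0 < s.re) :
    riemannZeta₁ s = s * ((s - 1) * mellin (truncatedError 1 1) (-s) + 1) := by
  refine eqOn_halfPlane_of_eqOn_one_lt_re (F := riemannZeta₁)
    (G := fun s => s * ((s - 1) * mellin (truncatedError 1 1) (-s) + 1))
    differentiable_riemannZeta₁.differentiableOn (fun z hz => ?_) (fun z hz => ?_) hs
  · have hd := (differentiableAt_mellin_truncatedError (by simp) sum_one_sub_isBigO hz).comp z
      differentiableAt_id.neg
    refine DifferentiableAt.differentiableWithinAt ?_
    exact differentiableAt_id.mul (((differentiableAt_id.sub_const 1).mul hd).add_const 1)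
  · have hz1 : z ≠ 1 := fun h => by simp [h] at hz
    have hz1' := sub_ne_zero.mpr hz1
    rw [riemannZeta₁_eq_sub_one_mul hz1, ← LSeries_one_eq_riemannZeta hz,
      LSeries_eq_mellin_truncatedError (by simp) zero_lt_one sum_one_sub_isBigO hz]
    field_simp

lemma riemannZeta_ne_zero_of_mem_Ioo {x : ℝ} (hx : x ∈ Set.Ioo (0 : ℝ) 1) :
    riemannZeta x ≠ 0 := by
  intro h0
  have hx1 : (x : ℂ) ≠ 1 := by exact_mod_cast hx.2.ne
  have hZ := riemannZeta₁_eq_mellin (s := x) (by simpa using hx.1)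
  obtain ⟨y, hy, hy0⟩ : ∃ y : ℝ, mellin (truncatedError 1 1) (-(x : ℂ)) = y ∧ y ≤ 0 := by
    refine ⟨∫ t in Set.Ioi (1 : ℝ), t ^ (-x - 1) * (⌊t⌋₊ - t), ?_, ?_⟩
    · rw [mellin_truncatedError, ← integral_complex_ofReal]
      refine setIntegral_congr_fun measurableSet_Ioi fun t ht => ?_
      have ht0 : (0 : ℝ) ≤ t := zero_le_one.trans (le_of_lt ht)
      simp [Complex.ofReal_cpow ht0]
    · refine setIntegral_nonpos measurableSet_Ioi fun t ht => ?_
      have ht0 : (0 : ℝ) ≤ t := zero_le_one.trans (le_of_lt ht)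
      exact mul_nonpos_of_nonneg_of_nonpos (by positivity) (by linarith [Nat.floor_le ht0])
  rw [riemannZeta₁_eq_sub_one_mul hx1, h0, hy, mul_zero] at hZ
  have hZ' : 0 = x * ((x - 1) * y + 1) := by exact_mod_cast hZ
  have : 0 < x * ((x - 1) * y + 1) := mul_pos hx.1 (by nlinarith [hx.2])
  linarith

end RealZeros

section KFree

open Classical in
/-- The indicator function of the `k`-free integers. -/
noncomputable def kfreeIndicator (k n : ℕ) : ℂ := if KFree k n then 1 else 0

open Classical in
/-- The indicator function of the `k`-th powers. -/
noncomputable def powIndicator (k n : ℕ) : ℂ := if ∃ d : ℕ, d ^ k = n then 1 else 0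

lemma norm_kfreeIndicator_le (k n : ℕ) : ‖kfreeIndicator k n‖ ≤ 1 := by
  unfold kfreeIndicator; split_ifs <;> simp

lemma norm_powIndicator_le (k n : ℕ) : ‖powIndicator k n‖ ≤ 1 := by
  unfold powIndicator; split_ifs <;> simp

lemma sum_kfreeIndicator (k : ℕ) (x : ℝ) :
    ∑ n ∈ Icc 1 ⌊x⌋₊, kfreeIndicator k n = (Qf k x : ℂ) := by
  simp [kfreeIndicator, Qf, Finset.sum_boole]

lemma exists_kfree_mul_pow {k n : ℕ} (hk : k ≠ 0) (hn : n ≠ 0) :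
    ∃ m d : ℕ, KFree k m ∧ m * d ^ k = n := by
  induction n using Nat.strong_induction_on with
  | _ n ih =>
    by_cases hfree : KFree k n
    · exact ⟨n, 1, hfree, by simp⟩
    · simp only [KFree, not_forall, not_not] at hfree
      obtain ⟨e, he, q, rfl⟩ := hfree
      have hq : q ≠ 0 := right_ne_zero_of_mul hn
      have hlt : q < e ^ k * q :=
        lt_mul_of_one_lt_left (Nat.pos_of_ne_zero hq) (Nat.one_lt_pow hk he)
      obtain ⟨m, d, hm, rfl⟩ := ih q hlt hq
      exact ⟨m, e * d, hm, by rw [mul_pow]; ring⟩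

lemma KFree.dvd_of_mul_pow_eq {k m m' d e : ℕ} (hm' : KFree k m') (hd : d ≠ 0)
    (h : m * d ^ k = m' * e ^ k) : d ∣ e := by
  obtain ⟨g, d', e', hg, hcop, rfl, rfl⟩ :=
    Nat.exists_coprime' (Nat.gcd_pos_of_pos_left e (Nat.pos_of_ne_zero hd))
  have hg0 : 0 < g ^ k := by positivity
  have h' : m * d' ^ k = m' * e' ^ k := by
    refine Nat.eq_of_mul_eq_mul_right hg0 ?_
    rw [mul_assoc, mul_assoc, ← mul_pow, ← mul_pow, h]
  have hdvd : d' ^ k ∣ m' :=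
    (hcop.pow k k).dvd_of_dvd_mul_right (h' ▸ Dvd.intro_left m rfl)
  have hd1 : ¬ 1 < d' := fun hlt => hm' d' hlt hdvd
  have : d' ≠ 0 := left_ne_zero_of_mul hd
  have hd' : d' = 1 := by omega
  subst hd'
  simp

lemma KFree.mul_pow_right_unique {k m m' d e : ℕ} (hm : KFree k m) (hm' : KFree k m')
    (hn : m * d ^ k ≠ 0) (hk : k ≠ 0) (h : m * d ^ k = m' * e ^ k) : d = e := by
  have hd : d ≠ 0 := by rintro rfl; simp [hk] at hn
  have he : e ≠ 0 := by rintro rfl; exact hn (by simp [h, hk])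
  exact Nat.dvd_antisymm (hm'.dvd_of_mul_pow_eq hd h) (hm.dvd_of_mul_pow_eq he h.symm)

open scoped LSeries.notation in
lemma kfreeIndicator_convolution_powIndicator {k n : ℕ} (hk : k ≠ 0) (hn : n ≠ 0) :
    (kfreeIndicator k ⍟ powIndicator k) n = 1 := by
  obtain ⟨m, d, hm, rfl⟩ := exists_kfree_mul_pow hk hn
  rw [LSeries.convolution_def]
  have hval : kfreeIndicator k m * powIndicator k (d ^ k) = 1 := by
    simp [kfreeIndicator, powIndicator, hm]
  rw [← hval]
  refine Finset.sum_eq_single (m, d ^ k) (fun p hp hne => ?_) (fun h => ?_)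
  · by_contra hp0
    have hp1 : KFree k p.1 := by
      by_contra h; exact hp0 (by simp [kfreeIndicator, h])
    have hp2 : ∃ e : ℕ, e ^ k = p.2 := by
      by_contra h; exact hp0 (by simp only [powIndicator, if_neg h, mul_zero])
    obtain ⟨e, he⟩ := hp2
    have hmul : m * d ^ k = p.1 * e ^ k := by
      rw [he, (Nat.mem_divisorsAntidiagonal.mp hp).1]
    obtain rfl := hm.mul_pow_right_unique hp1 hn hk hmul
    have h1 : p.1 = m :=
      (Nat.eq_of_mul_eq_mul_right (Nat.pos_of_ne_zero (right_ne_zero_of_mul hn)) hmul).symm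
    exact hne (Prod.ext h1 he.symm)
  · exact absurd (Nat.mem_divisorsAntidiagonal.mpr ⟨rfl, hn⟩) h

lemma LSeries_powIndicator {k : ℕ} (hk : k ≠ 0) {s : ℂ} (hs : 1 < (k * s).re) :
    LSeries (powIndicator k) s = riemannZeta (k * s) := by
  rw [← LSeries_one_eq_riemannZeta hs, LSeries, LSeries,
    ← (Nat.pow_left_injective hk).tsum_eq (f := LSeries.term (powIndicator k) s)]
  · refine tsum_congr fun d => ?_
    rcases eq_or_ne d 0 with rfl | hd
    · simp [hk]
    · rw [LSeries.term_of_ne_zero (pow_ne_zero k hd), LSeries.term_of_ne_zero hd,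
        Complex.natCast_cpow_natCast_mul]
      simp [powIndicator]
  · intro n hn
    by_contra h
    refine hn ?_
    have h0 : powIndicator k n = 0 := if_neg fun ⟨d, hd⟩ => h ⟨d, hd⟩
    simp [LSeries.term, h0]

lemma LSeries_kfreeIndicator_mul {k : ℕ} (hk : k ≠ 0) {s : ℂ} (hs : 1 < s.re) :
    LSeries (kfreeIndicator k) s * riemannZeta (k * s) = riemannZeta s := by
  have hk1 : (1 : ℝ) ≤ k := by exact_mod_cast Nat.one_le_iff_ne_zero.mpr hk
  have hks : 1 < (k * s).re := by
    have : (k * s).re = k * s.re := by simp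
    nlinarith
  rw [← LSeries_powIndicator hk hks, ← LSeries_one_eq_riemannZeta hs, ← LSeries_convolution'
    (LSeriesSummable_of_bounded_of_one_lt_re (fun n _ => norm_kfreeIndicator_le k n) hs)
    (LSeriesSummable_of_bounded_of_one_lt_re (fun n _ => norm_powIndicator_le k n) hs)]
  exact LSeries_congr (fun hn => kfreeIndicator_convolution_powIndicator hk hn) s

end KFree

section Reflection

variable {k : ℕ}

lemma sum_kfreeIndicator_sub_isBigO {a : ℝ}
    (h : (fun x : ℝ => Rf k x) =O[atTop] fun x : ℝ => x ^ a) :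
    (fun t : ℝ => ∑ n ∈ Icc 1 ⌊t⌋₊, kfreeIndicator k n - ((riemannZeta k).re : ℂ)⁻¹ * (t : ℂ))
      =O[atTop] fun t : ℝ => t ^ a := by
  have heq (t : ℝ) : ∑ n ∈ Icc 1 ⌊t⌋₊, kfreeIndicator k n - ((riemannZeta k).re : ℂ)⁻¹ * (t : ℂ) =
      (Rf k t : ℂ) := by
    rw [sum_kfreeIndicator, Rf]
    push_cast
    ring
  simpa only [heq, Complex.isBigO_ofReal_left] using h

/-- Continuation of the Mellin representation of `ζ(s) / ζ(k s)`, with denominators cleared. -/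
lemma mellin_mul_riemannZeta₁_eq (hk : k ≠ 0) {a : ℝ} (ha : a < 1)
    (h : (fun x : ℝ => Rf k x) =O[atTop] fun x : ℝ => x ^ a) {s : ℂ} (hs : a < s.re) :
    s * ((s - 1) * mellin (truncatedError (kfreeIndicator k) ((riemannZeta k).re : ℂ)⁻¹) (-s)
      + ((riemannZeta k).re : ℂ)⁻¹) * riemannZeta₁ (k * s) = riemannZeta₁ s * (k * s - 1) := by
  have hE := sum_kfreeIndicator_sub_isBigO h
  generalize ((riemannZeta k).re : ℂ)⁻¹ = c at hE ⊢
  refine eqOn_halfPlane_of_eqOn_one_lt_re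
    (F := fun s => s * ((s - 1) * mellin (truncatedError (kfreeIndicator k) c) (-s) + c)
      * riemannZeta₁ (k * s))
    (G := fun s => riemannZeta₁ s * (k * s - 1)) (fun z hz => ?_)
    (by fun_prop) (fun z hz => ?_) hs
  · have hd := (differentiableAt_mellin_truncatedError (norm_kfreeIndicator_le k) hE hz).comp z
      differentiableAt_id.neg
    refine DifferentiableAt.differentiableWithinAt (.mul ?_ (by fun_prop))
    exact differentiableAt_id.mul (((differentiableAt_id.sub_const 1).mul hd).add_const c)
  · have hk1 : (1 : ℝ) ≤ k := by exact_mod_cast Nat.one_le_iff_ne_zero.mpr hk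
    have hkz : 1 < (k * z).re := by
      have : (k * z).re = k * z.re := by simp
      nlinarith
    have hz1 : z ≠ 1 := fun h => by simp [h] at hz
    have hkz1 : (k * z : ℂ) ≠ 1 := fun h => by simp [h] at hkz
    have hz1' := sub_ne_zero.mpr hz1
    rw [riemannZeta₁_eq_sub_one_mul hz1, riemannZeta₁_eq_sub_one_mul hkz1,
      ← LSeries_kfreeIndicator_mul hk hz,
      LSeries_eq_mellin_truncatedError (norm_kfreeIndicator_le k) ha hE hz]
    field_simp

/-- Under the hypothesis, a zero `s` of zeta with `1 / 2 < re s` yields another one, `1 - s / k`. -/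
lemma riemannZeta_one_sub_div_eq_zero (hk : 2 ≤ k)
    (h : (fun x : ℝ => Rf k x) =O[atTop] fun x : ℝ => x ^ ((1 : ℝ) / (2 * k)))
    {s : ℂ} (hs : 1 / 2 < s.re) (hs0 : riemannZeta s = 0) :
    1 / 2 < (1 - s / k).re ∧ riemannZeta (1 - s / k) = 0 := by
  have hk2 : (2 : ℝ) ≤ k := by exact_mod_cast hk
  have hk0 : k ≠ 0 := by omega
  have hkC : (k : ℂ) ≠ 0 := by exact_mod_cast hk0
  have hs1 : s.re < 1 := by
    by_contra! hle
    exact riemannZeta_ne_zero_of_one_le_re hle hs0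
  have hre : (s / k).re = s.re / k := by simp
  have hlt : (s / k).re < 1 / 2 := by
    rw [hre, div_lt_iff₀ (by linarith)]
    linarith
  have hgt : 1 / (2 * (k : ℝ)) < (s / k).re := by
    rw [hre, ← div_div]
    gcongr
  have hpos : 0 < (s / k).re := lt_trans (by positivity) hgt
  have ha : 1 / (2 * (k : ℝ)) < 1 := by linarith
  have hne : s ≠ 1 := fun h => by simp [h] at hs1
  have hne' : s / k ≠ 1 := fun h => by norm_num [h] at hlt
  have hZ := mellin_mul_riemannZeta₁_eq hk0 ha h hgt
  rw [mul_div_cancel₀ s hkC, riemannZeta₁_eq_sub_one_mul hne, hs0,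
    riemannZeta₁_eq_sub_one_mul hne', mul_zero, mul_zero, eq_comm, mul_eq_zero, mul_eq_zero,
    or_iff_left (sub_ne_zero.mpr hne), or_iff_right (sub_ne_zero.mpr hne')] at hZ
  refine ⟨by rw [Complex.sub_re, Complex.one_re]; linarith, ?_⟩
  rw [riemannZeta_one_sub (fun n hn => ?_) hne', hZ, mul_zero]
  have : (s / k).re = -n := by rw [hn]; simp
  linarith [n.cast_nonneg (α := ℝ)]

end Reflection

theorem Rk_bigO_implies_no_zeros (k : ℕ) (hk : 2 ≤ k)
    (h : (fun x : ℝ => Rf k x) =O[atTop] fun x : ℝ => x ^ ((1 : ℝ) / (2 * k))) :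
    ∀ s : ℂ, 1 / 2 < s.re → riemannZeta s ≠ 0 := by
  intro s hs hs0
  have hk2 : (2 : ℝ) ≤ k := by exact_mod_cast hk
  have hkC : (k : ℂ) ≠ 0 := by exact_mod_cast (by omega : k ≠ 0)
  have hkC' : (k : ℂ) + 1 ≠ 0 := by exact_mod_cast k.succ_ne_zero
  -- The iterates of `z ↦ 1 - z / k` starting at `s` converge to the fixed point `k / (k + 1)`.
  let u : ℕ → ℂ := fun n => k / (k + 1) + (s - k / (k + 1)) * (-1 / k) ^ n
  have hu (n : ℕ) : 1 / 2 < (u n).re ∧ riemannZeta (u n) = 0 := by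
    induction n with
    | zero => simpa [u, hs0] using hs
    | succ n ih =>
      have hstep : u (n + 1) = 1 - u n / k := by
        simp only [u, pow_succ]
        field_simp
        ring
      rw [hstep]
      exact riemannZeta_one_sub_div_eq_zero hk h ih.1 ih.2
  have hpow : Tendsto (fun n : ℕ => (-1 / (k : ℂ)) ^ n) atTop (nhds 0) := by
    refine tendsto_pow_atTop_nhds_zero_of_norm_lt_one ?_
    rw [norm_div, norm_neg, norm_one, Complex.norm_natCast, div_lt_one (by linarith)]
    linarith
  have hlim : Tendsto u atTop (nhds (k / (k + 1))) := by
    simpa using (hpow.const_mul (s - k / (k + 1))).const_add (k / (k + 1) : ℂ)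
  have hzero : riemannZeta (k / (k + 1)) = 0 :=
    isClosed_riemannZetaZeros.mem_of_tendsto hlim (.of_forall fun n => (hu n).2)
  refine riemannZeta_ne_zero_of_mem_Ioo (x := k / (k + 1)) ⟨by positivity, ?_⟩ ?_
  · rw [div_lt_one (by positivity)]
    linarith
  · simpa using hzero
end
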